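/- Let (X, ≤) be a poset and M : X → 𝒫(𝒫(X)) a map such that the presentation (X, ≤, M) is direct (i.e., monotone, reflexive, and transitive). Then the map sending a downset S of (X, ≤) to cl(S) := {x ∈ X | ∃ D ∈ M(x), D ⊆ S} is a well-defined closure operator on the complete lattice of downsets of (X, ≤) ordered by inclusion: it maps downsets to downsets, is order-preserving, extensive (S ⊆ cl(S)), and idempotent (cl(cl(S)) = cl(S)). -/

import Mathlib

/-- The refinement relation: `A ≪ B` iff every element of `A` is below some element of `B`. -/
def Refines {X : Type*} [Preorder X] (A B : Set X) : Prop :=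
  ∀ a ∈ A, ∃ b ∈ B, a ≤ b

/-- A presentation `(X, ≤, M)` is monotone if whenever `y ≤ x` and `C ∈ M(x)`,
there is some `D ∈ M(y)` with `D ≪ C`. -/
def MonotonePres {X : Type*} [Preorder X] (M : X → Set (Set X)) : Prop :=
  ∀ x y : X, y ≤ x → ∀ C ∈ M x, ∃ D ∈ M y, Refines D C

/-- A presentation `(X, ≤, M)` is reflexive if for each `x` there is some
`C ∈ M(x)` with `C ≪ {x}`. -/
def ReflexivePres {X : Type*} [Preorder X] (M : X → Set (Set X)) : Prop :=
  ∀ x : X, ∃ C ∈ M x, Refines C {x}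

/-- A presentation `(X, ≤, M)` is transitive if for every `x`, every `C ∈ M(x)`,
and every family `{D_c | c ∈ C}` with `D_c ∈ M(c)` for each `c ∈ C`, there exists
`E ∈ M(x)` with `E ≪ ⋃_{c ∈ C} D_c`. -/
def TransitivePres {X : Type*} [Preorder X] (M : X → Set (Set X)) : Prop :=
  ∀ x : X, ∀ C ∈ M x, ∀ D : X → Set X, (∀ c ∈ C, D c ∈ M c) →
    ∃ E ∈ M x, Refines E (⋃ c ∈ C, D c)

/-- The closure map `cl(S) := {x ∈ X | ∃ D ∈ M(x), D ⊆ S}`. -/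
def clP {X : Type*} (M : X → Set (Set X)) (S : Set X) : Set X :=
  {x : X | ∃ D ∈ M x, D ⊆ S}

section

variable {X : Type*} {M : X → Set (Set X)}

theorem clP_mono : Monotone (clP M) :=
  fun _ _ hST _ ⟨D, hD, hDS⟩ ↦ ⟨D, hD, hDS.trans hST⟩

section Preorder

variable [Preorder X] {A B S : Set X}

/-- The axioms of a direct presentation supply covers only up to refinement; for downsets, a
refinement of a subset is again a subset, which is all that membership in `clP M S` asks. -/
theorem Refines.subset_of_isLowerSet (hAB : Refines A B) (hS : IsLowerSet S) (hBS : B ⊆ S) :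
    A ⊆ S := fun a ha ↦
  let ⟨_, hb, hab⟩ := hAB a ha
  hS hab (hBS hb)

theorem MonotonePres.isLowerSet_clP (hM : MonotonePres M) (hS : IsLowerSet S) :
    IsLowerSet (clP M S) := by
  rintro x y hyx ⟨C, hC, hCS⟩
  obtain ⟨D, hD, hDC⟩ := hM x y hyx C hC
  exact ⟨D, hD, hDC.subset_of_isLowerSet hS hCS⟩

theorem ReflexivePres.subset_clP (hM : ReflexivePres M) (hS : IsLowerSet S) : S ⊆ clP M S := by
  intro x hx
  obtain ⟨C, hC, hCx⟩ := hM x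
  exact ⟨C, hC, hCx.subset_of_isLowerSet hS (Set.singleton_subset_iff.mpr hx)⟩

theorem TransitivePres.clP_clP_subset (hM : TransitivePres M) (hS : IsLowerSet S) :
    clP M (clP M S) ⊆ clP M S := by
  rintro x ⟨C, hC, hCS⟩
  choose! D hD hDS using hCS
  obtain ⟨E, hE, hED⟩ := hM x C hC D hD
  exact ⟨E, hE, hED.subset_of_isLowerSet hS (Set.iUnion₂_subset hDS)⟩

theorem clP_closureOperator_of_direct_general (hmono : MonotonePres M) (hrefl : ReflexivePres M)
    (htrans : TransitivePres M) :
    (∀ S : Set X, IsLowerSet S → IsLowerSet (clP M S)) ∧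
    Monotone (clP M) ∧
    (∀ S : Set X, IsLowerSet S → S ⊆ clP M S) ∧
    (∀ S : Set X, IsLowerSet S → clP M (clP M S) = clP M S) :=
  ⟨fun _ ↦ hmono.isLowerSet_clP, clP_mono, fun _ ↦ hrefl.subset_clP,
    fun _ hS ↦ (htrans.clP_clP_subset hS).antisymm (clP_mono (hrefl.subset_clP hS))⟩

end Preorder

end

/-- If the presentation `(X, ≤, M)` is direct (monotone, reflexive
and transitive), then `cl` is a well-defined closure operator on the lattice of
downsets of `(X, ≤)` ordered by inclusion: it maps downsets to downsets, is
order-preserving, extensive, and idempotent. -/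
theorem clP_closureOperator_of_direct {X : Type*} [PartialOrder X]
    (M : X → Set (Set X)) (hmono : MonotonePres M) (hrefl : ReflexivePres M)
    (htrans : TransitivePres M) :
    (∀ S : Set X, IsLowerSet S → IsLowerSet (clP M S)) ∧
    (∀ S T : Set X, IsLowerSet S → IsLowerSet T → S ⊆ T → clP M S ⊆ clP M T) ∧
    (∀ S : Set X, IsLowerSet S → S ⊆ clP M S) ∧
    (∀ S : Set X, IsLowerSet S → clP M (clP M S) = clP M S) := by
  obtain ⟨hlower, hclmono, hext, hidem⟩ := clP_closureOperator_of_direct_general hmono hrefl htrans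
  exact ⟨hlower, fun _ _ _ _ hST ↦ hclmono hST, hext, hidem⟩
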